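/- (Proposition 2: explanations transfer from abstract to concrete models.) Let M be a STRIPS planning model over fluents F, let P₁ ⊆ P₂ ⊆ F (so that f_{P₁}(M) ⊑ f_{P₂}(M)), and let ε ⊆ F be a set of explanatory fluents. If the concretization of the more abstract model by ε is unsolvable, i.e. Π_{f_{P₂ \ ε}(M)} = ∅, then the concretization of the more concrete model by ε is also unsolvable, i.e. Π_{f_{P₁ \ ε}(M)} = ∅. -/

import Mathlib

/-- A STRIPS planning model over fluents `F` and action labels `A`. -/
structure Strips (F : Type*) (A : Type*) where
  prec : A → Set F
  add : A → Set F
  del : A → Set F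
  I : Set F
  G : Set F

/-- Result of applying action `a` in state `S`. -/
def Strips.res {F A : Type*} (M : Strips F A) (a : A) (S : Set F) : Set F :=
  (S \ M.del a) ∪ M.add a

/-- The state trajectory `S₀, S₁, …, Sₙ` of a plan from a state. -/
def Strips.traj {F A : Type*} (M : Strips F A) : List A → Set F → List (Set F)
  | [], S => [S]
  | a :: π, S => S :: M.traj π (M.res a S)

/-- A plan is executable from `S` if each action's precondition holds when applied. -/
def Strips.exec {F A : Type*} (M : Strips F A) : List A → Set F → Prop
  | [], _ => True
  | a :: π, S => M.prec a ⊆ S ∧ M.exec π (M.res a S)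

/-- The final state `Sₙ` of the trajectory of a plan from a state. -/
def Strips.finalState {F A : Type*} (M : Strips F A) (π : List A) (S : Set F) : Set F :=
  π.foldl (fun T a => M.res a T) S

/-- The state `S_k` of the trajectory of a plan from a state. -/
def Strips.stateAt {F A : Type*} (M : Strips F A) (π : List A) (S : Set F) (k : ℕ) : Set F :=
  M.finalState (π.take k) S

/-- A plan is valid if it is executable from the initial state and achieves the goal. -/
def Strips.Valid {F A : Type*} (M : Strips F A) (π : List A) : Prop :=
  M.exec π M.I ∧ M.G ⊆ M.finalState π M.I

/-- The set `Π_M` of valid plans of `M`. -/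
def Strips.Plans {F A : Type*} (M : Strips F A) : Set (List A) :=
  {π | M.Valid π}

/-- The projection `f_P(M)` of a model, projecting out the fluents in `P`. -/
def Strips.proj {F A : Type*} (M : Strips F A) (P : Set F) : Strips F A where
  prec a := M.prec a \ P
  add a := M.add a \ P
  del a := M.del a \ P
  I := M.I \ P
  G := M.G \ P

/-!
Projecting out fluents commutes with applying an action, hence with running a whole plan, and it
preserves inclusions of preconditions and of the goal in states. So every valid plan of a model
stays valid in each of its abstractions. Removing `ε` from both sets of projected fluents keeps
their inclusion, so the two concretizations are again related by abstraction.
-/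

namespace Strips

variable {F A : Type*} (M : Strips F A) (P : Set F)

/-- The abstraction relation `M₁ ⊑ M₂`: the model `M₂` is obtained from `M₁` by projecting out some
fluents. -/
def IsAbstractionOf (M₂ M₁ : Strips F A) : Prop :=
  ∃ R : Set F, M₁.proj R = M₂

theorem proj_proj (Q : Set F) : (M.proj P).proj Q = M.proj (P ∪ Q) := by
  simp only [proj, Set.sdiff_sdiff]

theorem proj_isAbstractionOf_proj {P Q : Set F} (hPQ : P ⊆ Q) :
    (M.proj Q).IsAbstractionOf (M.proj P) :=
  ⟨Q, by rw [proj_proj, Set.union_eq_right.mpr hPQ]⟩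

theorem proj_res (a : A) (S : Set F) : (M.proj P).res a (S \ P) = M.res a S \ P := by
  have hdel : (S \ P) \ (M.del a \ P) = (S \ M.del a) \ P := by
    grind
  simp only [res, proj, hdel, Set.union_sdiff_distrib]

theorem proj_finalState (π : List A) (S : Set F) :
    (M.proj P).finalState π (S \ P) = M.finalState π S \ P :=
  List.foldl_hom (· \ P) fun S a ↦ M.proj_res P a S

variable {M}

theorem exec.proj {π : List A} {S : Set F} (hexec : M.exec π S) :
    (M.proj P).exec π (S \ P) := by
  induction π generalizing S with
  | nil => trivial
  | cons a π ih =>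
    obtain ⟨hprec, hrest⟩ := hexec
    refine ⟨Set.sdiff_subset_sdiff_left hprec, ?_⟩
    rw [proj_res]
    exact ih hrest

theorem Valid.proj {π : List A} (hπ : M.Valid π) : (M.proj P).Valid π := by
  refine ⟨hπ.1.proj P, ?_⟩
  calc M.G \ P ⊆ M.finalState π M.I \ P := Set.sdiff_subset_sdiff_left hπ.2
    _ = (M.proj P).finalState π (M.I \ P) := (M.proj_finalState P π M.I).symm

theorem IsAbstractionOf.plans_subset {M₁ M₂ : Strips F A} (h : M₂.IsAbstractionOf M₁) :
    M₁.Plans ⊆ M₂.Plans := by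
  obtain ⟨R, rfl⟩ := h
  exact fun _ hπ ↦ Valid.proj R hπ

end Strips

theorem stmt6 {F A : Type*} (M : Strips F A) (P₁ P₂ : Set F) (h : P₁ ⊆ P₂)
    (ε : Set F) (habs : (M.proj (P₂ \ ε)).Plans = ∅) :
    (M.proj (P₁ \ ε)).Plans = ∅ := by
  have hsub : P₁ \ ε ⊆ P₂ \ ε := Set.sdiff_subset_sdiff_left h
  exact Set.subset_eq_empty (M.proj_isAbstractionOf_proj hsub).plans_subset habs
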